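/- For every n ≥ 0 and all x₁, x₂, y₁, y₂ ∈ (−1,1) with x₁ ≠ x₂ and y₁ ≠ y₂, the reproducing kernel of Π_n² in L²(W̃_{1/2}) satisfies K_n(W̃_{1/2}; (x₁+x₂, x₁x₂), (y₁+y₂, y₁y₂)) = (1/2) [ k_{n+1}(w; x₁, y₁) k_{n+1}(w; x₂, y₂) − k_{n+1}(w; x₂, y₁) k_{n+1}(w; x₁, y₂) ] / ((x₁ − x₂)(y₁ − y₂)). -/

import Mathlib

open MeasureTheory Real Set Filter
open scoped ENNReal

noncomputable section

/-- The parabolic-type domain `Ω`, the image of the triangle `-1 < x < y < 1`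
under `(x, y) ↦ (x + y, x y)`. -/
def omegaDom : Set (ℝ × ℝ) :=
  {q | ∃ x y : ℝ, -1 < x ∧ x < y ∧ y < 1 ∧ q = (x + y, x * y)}

/-- The square `[-1,1]²`. -/
def sqDom : Set (ℝ × ℝ) := Icc (-1 : ℝ) 1 ×ˢ Icc (-1 : ℝ) 1

/-- The open triangle `-1 < x < y < 1`. -/
def triDom : Set (ℝ × ℝ) := {q | -1 < q.1 ∧ q.1 < q.2 ∧ q.2 < 1}

/-- The smaller root `x(u,v)` of `t² - u t + v = 0`. -/
def xRoot (q : ℝ × ℝ) : ℝ := (q.1 - Real.sqrt (q.1 ^ 2 - 4 * q.2)) / 2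

/-- The larger root `y(u,v)` of `t² - u t + v = 0`. -/
def yRoot (q : ℝ × ℝ) : ℝ := (q.1 + Real.sqrt (q.1 ^ 2 - 4 * q.2)) / 2

/-- Evaluation of a two-variable polynomial at a point of `ℝ²`. -/
def evalP (P : MvPolynomial (Fin 2) ℝ) (q : ℝ × ℝ) : ℝ :=
  MvPolynomial.eval ![q.1, q.2] P

/-- The space `V_n(W)` of orthogonal polynomials of degree `n` for the weight `W`
on the domain `D`: polynomials of exact total degree `n` orthogonal to all
polynomials of lower degree. -/
def Vpoly (D : Set (ℝ × ℝ)) (W : ℝ × ℝ → ℝ) (n : ℕ) : Set (MvPolynomial (Fin 2) ℝ) :=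
  {P | P.totalDegree = n ∧ ∀ Q : MvPolynomial (Fin 2) ℝ, Q.totalDegree < n →
    (∫ q in D, evalP P q * evalP Q q * W q) = 0}

/-- `Q 0, …, Q n` is an orthonormal basis of `V_n(W)` on `D`. -/
def isONBVn (D : Set (ℝ × ℝ)) (W : ℝ × ℝ → ℝ) (n : ℕ)
    (Q : ℕ → MvPolynomial (Fin 2) ℝ) : Prop :=
  (∀ k, k ≤ n → Q k ∈ Vpoly D W n) ∧
  (∀ k, k ≤ n → ∀ j, j ≤ n →
    (∫ q in D, evalP (Q k) q * evalP (Q j) q * W q) = if k = j then 1 else 0) ∧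
  (∀ R ∈ Vpoly D W n, R ∈ Submodule.span ℝ (Q '' Set.Iic n))

/-- `K` is the reproducing kernel of `Π_n²` in `L²(W)` on the domain `D`:
it is a polynomial function, for each fixed `x ∈ D` it is a polynomial of total
degree `≤ n` in the second variable, and it reproduces every polynomial of total
degree `≤ n`. -/
def IsRK (D : Set (ℝ × ℝ)) (W : ℝ × ℝ → ℝ) (n : ℕ) (K : ℝ × ℝ → ℝ × ℝ → ℝ) : Prop :=
  (∃ KP : MvPolynomial (Fin 4) ℝ,
    ∀ x y : ℝ × ℝ, K x y = MvPolynomial.eval ![x.1, x.2, y.1, y.2] KP) ∧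
  (∀ x ∈ D, ∃ P : MvPolynomial (Fin 2) ℝ, P.totalDegree ≤ n ∧ ∀ y, K x y = evalP P y) ∧
  (∀ P : MvPolynomial (Fin 2) ℝ, P.totalDegree ≤ n →
    ∀ x ∈ D, (∫ y in D, K x y * evalP P y * W y) = evalP P x)

/-- `p` is the sequence of orthonormal polynomials with respect to the weight `w`
on `[-1,1]`: `p n` has degree exactly `n`, positive leading coefficient, and the
`p n` are orthonormal in `L²(w)`. -/
def IsONPS (w : ℝ → ℝ) (p : ℕ → Polynomial ℝ) : Prop :=
  (∀ n, (p n).natDegree = n) ∧ (∀ n, 0 < (p n).leadingCoeff) ∧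
  (∀ n m, (∫ x in Icc (-1:ℝ) 1, (p n).eval x * (p m).eval x * w x)
    = if n = m then 1 else 0)

/-- The Christoffel–Darboux kernel `k_n(x,y) = ∑_{j=0}^n p_j(x) p_j(y)`. -/
def CDK (p : ℕ → Polynomial ℝ) (n : ℕ) (x y : ℝ) : ℝ :=
  ∑ j ∈ Finset.range (n + 1), (p j).eval x * (p j).eval y

/-- The Jacobi factor `J_{a,b}(x) = (1-x)^a (1+x)^b`. -/
def Jw (a b : ℝ) (x : ℝ) : ℝ := (1 - x) ^ a * (1 + x) ^ b

/-- The factor `J*_{a,b}(u,v) = (1-u+v)^a (1+u+v)^b` on `Ω`. -/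
def JstarW (a b : ℝ) (q : ℝ × ℝ) : ℝ := (1 - q.1 + q.2) ^ a * (1 + q.1 + q.2) ^ b

/-- Modulus of continuity of `ψ` on `[-1,1]`. -/
def modCont (ψ : ℝ → ℝ) (t : ℝ) : ℝ :=
  sSup {d : ℝ | ∃ x ∈ Icc (-1:ℝ) 1, ∃ y ∈ Icc (-1:ℝ) 1, |x - y| ≤ t ∧ d = |ψ x - ψ y|}

/-- The generalized Jacobi class `GJ`. -/
def IsGJ (w : ℝ → ℝ) : Prop :=
  ∃ (r : ℕ) (ψ : ℝ → ℝ) (γ₀ γ₁ : ℝ) (γs xs : Fin r → ℝ),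
    -1 < γ₀ ∧ -1 < γ₁ ∧ (∀ i, -1 < γs i) ∧
    StrictMono xs ∧ (∀ i, xs i ∈ Ioo (-1:ℝ) 1) ∧
    ContinuousOn ψ (Icc (-1:ℝ) 1) ∧ (∀ x ∈ Icc (-1:ℝ) 1, 0 < ψ x) ∧
    IntegrableOn (fun t => modCont ψ t / t) (Ioc (0:ℝ) 1) ∧
    (∀ x : ℝ, |x| ≤ 1 → w x = ψ x * (1 - x) ^ γ₀ * (1 + x) ^ γ₁ * ∏ i, |x - xs i| ^ γs i) ∧
    (∀ x : ℝ, 1 < |x| → w x = 0)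

/-- The `L^p`-norm `‖f‖_{w,e}` on `[-1,1]` (as an extended nonnegative real). -/
def lpnormI (w : ℝ → ℝ) (e : ℝ) (f : ℝ → ℝ) : ℝ≥0∞ :=
  (∫⁻ x in Icc (-1:ℝ) 1, ENNReal.ofReal (|f x| ^ e * w x)) ^ (1 / e)

/-- The `L^p`-norm `‖f‖_{W,e}` on a planar domain `D` (as an extended nonnegative real). -/
def lpnormD (D : Set (ℝ × ℝ)) (W : ℝ × ℝ → ℝ) (e : ℝ) (f : ℝ × ℝ → ℝ) : ℝ≥0∞ :=
  (∫⁻ q in D, ENNReal.ofReal (|f q| ^ e * W q)) ^ (1 / e)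

/-- The operator `s_n^{i,j}(w; f, x)` built from the Christoffel–Darboux kernel of the
orthonormal polynomials `pij` of the weight `J_{i,j} w`. -/
def snOp (w : ℝ → ℝ) (pij : ℕ → Polynomial ℝ) (i j : ℝ) (n : ℕ) (f : ℝ → ℝ) (x : ℝ) : ℝ :=
  Jw (i/2) (j/2) x * ∫ y in Icc (-1:ℝ) 1, f y * CDK pij n x y * Jw (i/2) (j/2) y * w y

/-- Substitution `(x, y) ↦ (2 x y, x² + y² - 1)` on two-variable polynomials. -/
def quadSub (P : MvPolynomial (Fin 2) ℝ) : MvPolynomial (Fin 2) ℝ :=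
  MvPolynomial.aeval
    ![2 * MvPolynomial.X 0 * MvPolynomial.X 1,
      MvPolynomial.X 0 ^ 2 + MvPolynomial.X 1 ^ 2 - 1] P

/-- A one-variable polynomial viewed as a polynomial in the first variable. -/
def polyX (q : Polynomial ℝ) : MvPolynomial (Fin 2) ℝ :=
  Polynomial.aeval (MvPolynomial.X 0) q

/-- A one-variable polynomial viewed as a polynomial in the second variable. -/
def polyY (q : Polynomial ℝ) : MvPolynomial (Fin 2) ℝ :=
  Polynomial.aeval (MvPolynomial.X 1) q

lemma aux_evalP_cont (P : MvPolynomial (Fin 2) ℝ) : Continuous (evalP P) := by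
  unfold evalP
  have h : Continuous (fun v : Fin 2 → ℝ => MvPolynomial.eval v P) := MvPolynomial.continuous_eval P
  refine h.comp ?_
  refine continuous_pi fun i => ?_
  fin_cases i
  · exact continuous_fst
  · exact continuous_snd

lemma aux_geom (m : ℕ) : (∃ H : MvPolynomial (Fin 2) ℝ, H.totalDegree ≤ m ∧
    ∀ s t : ℝ, s ^ (m + 1) - t ^ (m + 1) = (s - t) * evalP H (s + t, s * t)) := by
  induction m using Nat.strong_induction_on with
  | _ m ih =>
    match m, ih with
    | 0, _ => exact ⟨1, by simp, by intro s t; simp [evalP]⟩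
    | 1, _ =>
      refine ⟨MvPolynomial.X 0, by simp [MvPolynomial.totalDegree_X], ?_⟩
      intro s t; simp [evalP]; ring
    | m + 2, ih =>
      obtain ⟨H1, d1, e1⟩ := ih (m + 1) (by omega)
      obtain ⟨H0, d0, e0⟩ := ih m (by omega)
      refine ⟨MvPolynomial.X 0 * H1 - MvPolynomial.X 1 * H0, ?_, ?_⟩
      · refine (MvPolynomial.totalDegree_sub _ _).trans (max_le ?_ ?_)
        · refine (MvPolynomial.totalDegree_mul _ _).trans ?_
          rw [MvPolynomial.totalDegree_X]; omega
        · refine (MvPolynomial.totalDegree_mul _ _).trans ?_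
          rw [MvPolynomial.totalDegree_X]; omega
      · intro s t
        have a1 := e1 s t
        have a0 := e0 s t
        have : evalP (MvPolynomial.X 0 * H1 - MvPolynomial.X 1 * H0) (s + t, s * t)
          = (s + t) * evalP H1 (s + t, s * t) - s * t * evalP H0 (s + t, s * t) := by
          simp [evalP]
        rw [this]
        linear_combination (s + t) * a1 - s * t * a0

lemma aux_mono (n j k : ℕ) (hk : k ≤ n + 1) (hjk : j ≤ k) :
    ∃ H : MvPolynomial (Fin 2) ℝ, H.totalDegree ≤ n ∧
    ∀ s t : ℝ, s ^ k * t ^ j - s ^ j * t ^ k = (s - t) * evalP H (s + t, s * t) := by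
  obtain rfl | hlt := hjk.eq_or_lt
  · exact ⟨0, by simp, by intro s t; simp [evalP]⟩
  · obtain ⟨m, rfl⟩ : ∃ m, k = j + (m + 1) := ⟨k - j - 1, by omega⟩
    obtain ⟨H, d, e⟩ := aux_geom m
    refine ⟨MvPolynomial.X 1 ^ j * H, ?_, ?_⟩
    · refine (MvPolynomial.totalDegree_mul _ _).trans ?_
      rw [MvPolynomial.totalDegree_X_pow]; omega
    · intro s t
      have : evalP (MvPolynomial.X 1 ^ j * H) (s + t, s * t)
          = (s * t) ^ j * evalP H (s + t, s * t) := by simp [evalP]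
      rw [this]
      have := e s t
      rw [mul_pow]
      linear_combination (s ^ j * t ^ j) * this

lemma aux_mono' (n j k : ℕ) (hk : k ≤ n + 1) (hj : j ≤ n + 1) :
    ∃ H : MvPolynomial (Fin 2) ℝ, H.totalDegree ≤ n ∧
    ∀ s t : ℝ, s ^ k * t ^ j - s ^ j * t ^ k = (s - t) * evalP H (s + t, s * t) := by
  rcases le_total j k with h | h
  · exact aux_mono n j k hk h
  · obtain ⟨H, d, e⟩ := aux_mono n k j hj h
    refine ⟨-H, by rwa [MvPolynomial.totalDegree_neg], fun s t => ?_⟩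
    have : evalP (-H) (s + t, s * t) = - evalP H (s + t, s * t) := by simp [evalP]
    rw [this]
    linear_combination - e s t

/-- An antisymmetrized product is divisible by `s - t` with symmetric quotient. -/
lemma aux_antisymm (n : ℕ) (A B : Polynomial ℝ) (hA : A.natDegree ≤ n + 1)
    (hB : B.natDegree ≤ n + 1) :
    ∃ H : MvPolynomial (Fin 2) ℝ, H.totalDegree ≤ n ∧
    ∀ s t : ℝ, A.eval s * B.eval t - B.eval s * A.eval t
      = (s - t) * evalP H (s + t, s * t) := by
  choose! H d e using aux_mono' n
  refine ⟨∑ k ∈ Finset.range (n + 2), ∑ j ∈ Finset.range (n + 2),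
    MvPolynomial.C (A.coeff k * B.coeff j) * H j k, ?_, ?_⟩
  · refine MvPolynomial.totalDegree_finsetSum_le fun k hk => ?_
    refine MvPolynomial.totalDegree_finsetSum_le fun j hj => ?_
    refine (MvPolynomial.totalDegree_mul _ _).trans ?_
    rw [MvPolynomial.totalDegree_C, zero_add]
    simp only [Finset.mem_range] at hk hj
    exact d j k (by omega) (by omega)
  · intro s t
    have hev : ∀ x : ℝ, A.eval x = ∑ k ∈ Finset.range (n + 2), A.coeff k * x ^ k := fun x =>
      Polynomial.eval_eq_sum_range' (by omega) x
    have hev' : ∀ x : ℝ, B.eval x = ∑ k ∈ Finset.range (n + 2), B.coeff k * x ^ k := fun x =>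
      Polynomial.eval_eq_sum_range' (by omega) x
    have h1 : evalP (∑ k ∈ Finset.range (n + 2), ∑ j ∈ Finset.range (n + 2),
        MvPolynomial.C (A.coeff k * B.coeff j) * H j k) (s + t, s * t)
        = ∑ k ∈ Finset.range (n + 2), ∑ j ∈ Finset.range (n + 2),
        (A.coeff k * B.coeff j) * evalP (H j k) (s + t, s * t) := by
      simp [evalP, map_sum]
    rw [h1, hev, hev, hev', hev', mul_comm (∑ k ∈ Finset.range (n + 2), B.coeff k * s ^ k),
      Finset.sum_mul_sum, Finset.sum_mul_sum, Finset.mul_sum, ← Finset.sum_sub_distrib]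
    refine Finset.sum_congr rfl fun k hk => ?_
    rw [Finset.mul_sum, ← Finset.sum_sub_distrib]
    refine Finset.sum_congr rfl fun j hj => ?_
    simp only [Finset.mem_range] at hk hj
    have := e j k (by omega) (by omega) s t
    linear_combination (A.coeff k * B.coeff j) * this

/-- `(s - t) P(s + t, s t)` is polynomial in `s` of degree at most `n + 1`. -/
lemma aux_slice (n : ℕ) (P : MvPolynomial (Fin 2) ℝ) (hP : P.totalDegree ≤ n) (t : ℝ) :
    ∃ Q : Polynomial ℝ, Q.natDegree ≤ n + 1 ∧
      ∀ s : ℝ, Q.eval s = (s - t) * evalP P (s + t, s * t) := by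
  refine ⟨(Polynomial.X - Polynomial.C t) * ∑ d ∈ P.support, Polynomial.C (P.coeff d) *
    ((Polynomial.X + Polynomial.C t) ^ d 0 * (Polynomial.X * Polynomial.C t) ^ d 1), ?_, ?_⟩
  · refine Polynomial.natDegree_mul_le.trans ?_
    rw [Polynomial.natDegree_X_sub_C, add_comm]
    gcongr
    refine Polynomial.natDegree_sum_le_of_forall_le _ _ fun d hd => ?_
    refine (Polynomial.natDegree_C_mul_le _ _).trans ?_
    refine Polynomial.natDegree_mul_le.trans ?_
    have h := MvPolynomial.le_totalDegree hd
    rw [Finsupp.sum_fintype _ _ (by simp), Fin.sum_univ_two] at h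
    have h1 : ((Polynomial.X + Polynomial.C t) ^ d 0).natDegree ≤ d 0 := by
      simpa using Polynomial.natDegree_pow_le_of_le (d 0) (Polynomial.natDegree_X_add_C t).le
    have h2 : ((Polynomial.X * Polynomial.C t) ^ d 1).natDegree ≤ d 1 := by
      have : (Polynomial.X * Polynomial.C t).natDegree ≤ 1 := by
        refine (Polynomial.natDegree_mul_C_le _ _).trans ?_
        simp
      simpa using Polynomial.natDegree_pow_le_of_le (d 1) this
    omega
  · intro s
    simp [evalP, MvPolynomial.eval_eq', Polynomial.eval_finsetSum, mul_comm t s]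

/-- one variable polynomials times the weight are integrable. -/
lemma aux_int1 {w : ℝ → ℝ} (hwi : IntegrableOn w (Icc (-1:ℝ) 1)) (f : ℝ → ℝ)
    (hf : Continuous f) : IntegrableOn (fun x => f x * w x) (Icc (-1:ℝ) 1) :=
  IntegrableOn.continuousOn_mul hf.continuousOn hwi isCompact_Icc

lemma aux_int2 {w : ℝ → ℝ} (hwi : IntegrableOn w (Icc (-1:ℝ) 1)) (f : ℝ × ℝ → ℝ)
    (hf : Continuous f) :
    IntegrableOn (fun z : ℝ × ℝ => f z * (w z.1 * w z.2)) (Icc (-1:ℝ) 1 ×ˢ Icc (-1:ℝ) 1) := by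
  refine IntegrableOn.continuousOn_mul hf.continuousOn ?_ (isCompact_Icc.prod isCompact_Icc)
  have := Integrable.mul_prod hwi hwi
  rw [Measure.prod_restrict] at this
  exact this

lemma aux_cont_CDK (p : ℕ → Polynomial ℝ) (N : ℕ) (a : ℝ) : Continuous (CDK p N a) := by
  unfold CDK
  exact continuous_finsetSum _ fun j _ => continuous_const.mul (p j).continuous

/-- the one variable reproducing property. -/
lemma aux_repr1 {w : ℝ → ℝ} (hwi : IntegrableOn w (Icc (-1:ℝ) 1))
    {p : ℕ → Polynomial ℝ} (hp : IsONPS w p) (N : ℕ) (Q : Polynomial ℝ)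
    (hQ : Q.natDegree ≤ N) (a : ℝ) :
    ∫ s in Icc (-1:ℝ) 1, Q.eval s * CDK p N a s * w s = Q.eval a := by
  obtain ⟨h1, h2, h3⟩ := hp
  have hne : ∀ i, p i ≠ 0 := fun i h => by have := h2 i; simp [h] at this
  let S : Polynomial.Sequence ℝ := ⟨p, fun i => by
    rw [Polynomial.degree_eq_natDegree (hne i), h1]⟩
  have hspan := S.span_degreeLE (m := N) (fun i _ => (h2 i).ne'.isUnit)
  have hmem : Q ∈ Submodule.span ℝ (p '' Set.Iic N) := by
    have : Q ∈ Polynomial.degreeLE ℝ N := by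
      rw [Polynomial.mem_degreeLE]
      exact Polynomial.natDegree_le_iff_degree_le.mp hQ
    rw [← hspan] at this
    exact this
  have hI : ∀ R : Polynomial ℝ,
      IntegrableOn (fun s => R.eval s * CDK p N a s * w s) (Icc (-1:ℝ) 1) := fun R =>
    aux_int1 hwi (fun s => R.eval s * CDK p N a s) (R.continuous.mul (aux_cont_CDK p N a))
  clear hspan hQ
  induction hmem using Submodule.span_induction with
  | mem x hx =>
    obtain ⟨i, hi, rfl⟩ := hx
    have : ∀ s, (p i).eval s * CDK p N a s * w s
        = ∑ j ∈ Finset.range (N + 1), (p j).eval a * ((p i).eval s * (p j).eval s * w s) := by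
      intro s
      rw [CDK, Finset.mul_sum, Finset.sum_mul]
      exact Finset.sum_congr rfl fun j _ => by ring
    simp_rw [this]
    rw [integral_finsetSum]
    · simp_rw [integral_const_mul, h3]
      have : i ∈ Finset.range (N + 1) := by
        simp only [Set.mem_Iic] at hi
        simp; omega
      simp [this]
    · intro j _
      exact (aux_int1 hwi (fun s => (p i).eval s * (p j).eval s)
        ((p i).continuous.mul (p j).continuous)).const_mul _
  | zero => simp
  | add x y _ _ hx hy =>
    simp only [Polynomial.eval_add, add_mul]
    rw [integral_add (hI x) (hI y), hx, hy]
  | smul c x _ hx =>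
    simp only [Polynomial.eval_smul, smul_eq_mul, mul_assoc] at hx ⊢
    rw [integral_const_mul, hx]

lemma aux_CDK_poly {w : ℝ → ℝ} {p : ℕ → Polynomial ℝ} (hp : IsONPS w p) (N : ℕ) (a : ℝ) :
    ∃ A : Polynomial ℝ, A.natDegree ≤ N ∧ ∀ s, A.eval s = CDK p N a s := by
  refine ⟨∑ j ∈ Finset.range (N + 1), Polynomial.C ((p j).eval a) * p j, ?_, ?_⟩
  · refine Polynomial.natDegree_sum_le_of_forall_le _ _ fun j hj => ?_
    refine (Polynomial.natDegree_C_mul_le _ _).trans ?_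
    rw [hp.1 j]; simp at hj; omega
  · intro s; simp [CDK, Polynomial.eval_finsetSum]

/-- two variable reproducing property for `(s - t) P(s + t, s t)`. -/
lemma aux_repr2 {w : ℝ → ℝ} (hwi : IntegrableOn w (Icc (-1:ℝ) 1))
    {p : ℕ → Polynomial ℝ} (hp : IsONPS w p) (n : ℕ) (P : MvPolynomial (Fin 2) ℝ)
    (hP : P.totalDegree ≤ n) (a b : ℝ) :
    ∫ z in Icc (-1:ℝ) 1 ×ˢ Icc (-1:ℝ) 1, ((z.1 - z.2) * evalP P (z.1 + z.2, z.1 * z.2) *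
      (CDK p (n+1) a z.1 * CDK p (n+1) b z.2)) * (w z.1 * w z.2)
      = (a - b) * evalP P (a + b, a * b) := by
  have hc : Continuous fun z : ℝ × ℝ => (z.1 - z.2) * evalP P (z.1 + z.2, z.1 * z.2) *
      (CDK p (n+1) a z.1 * CDK p (n+1) b z.2) := by
    have h1 := aux_evalP_cont P
    have h2 := aux_cont_CDK p (n+1) a
    have h3 := aux_cont_CDK p (n+1) b
    fun_prop
  rw [Measure.volume_eq_prod, setIntegral_prod _ (by
    rw [← Measure.volume_eq_prod]; exact aux_int2 hwi _ hc)]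
  have hin : ∀ s : ℝ, ∫ t in Icc (-1:ℝ) 1, ((s - t) * evalP P (s + t, s * t) *
      (CDK p (n+1) a s * CDK p (n+1) b t)) * (w s * w t)
      = ((s - b) * evalP P (s + b, s * b)) * CDK p (n+1) a s * w s := by
    intro s
    obtain ⟨Q, hQ, hQe⟩ := aux_slice n P hP s
    have h := aux_repr1 hwi hp (n+1) Q hQ b
    rw [hQe] at h
    have e : ∀ t : ℝ, ((s - t) * evalP P (s + t, s * t) *
      (CDK p (n+1) a s * CDK p (n+1) b t)) * (w s * w t) =
      (-(CDK p (n+1) a s * w s)) * (Q.eval t * CDK p (n+1) b t * w t) := by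
      intro t
      rw [hQe, add_comm t s, mul_comm t s]; ring
    simp_rw [e]
    rw [integral_const_mul, h, add_comm b s, mul_comm b s]; ring
  simp_rw [hin]
  obtain ⟨Q, hQ, hQe⟩ := aux_slice n P hP b
  have h := aux_repr1 hwi hp (n+1) Q hQ a
  simp_rw [hQe] at h
  exact h

lemma aux_measTri : MeasurableSet triDom := by
  have : triDom = {q : ℝ × ℝ | -1 < q.1} ∩ ({q | q.1 < q.2} ∩ {q | q.2 < 1}) := by
    ext q; simp [triDom]
  rw [this]
  exact (measurableSet_lt measurable_const measurable_fst).inter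
    ((measurableSet_lt measurable_fst measurable_snd).inter
      (measurableSet_lt measurable_snd measurable_const))

lemma aux_image : (fun z : ℝ × ℝ => (z.1 + z.2, z.1 * z.2)) '' triDom = omegaDom := by
  ext q
  constructor
  · rintro ⟨z, ⟨h1, h2, h3⟩, rfl⟩
    exact ⟨z.1, z.2, h1, h2, h3, rfl⟩
  · rintro ⟨x, y, h1, h2, h3, rfl⟩
    exact ⟨(x, y), ⟨h1, h2, h3⟩, rfl⟩

lemma aux_inj : InjOn (fun z : ℝ × ℝ => (z.1 + z.2, z.1 * z.2)) triDom := by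
  rintro ⟨a, b⟩ ⟨_, h, _⟩ ⟨c, d⟩ ⟨_, h', _⟩ he
  simp only [Prod.mk.injEq] at he h h' ⊢
  obtain ⟨e1, e2⟩ := he
  have hsq : (b - a) ^ 2 = (d - c) ^ 2 := by
    have : (b - a) ^ 2 = (a + b) ^ 2 - 4 * (a * b) := by ring
    rw [this, e1, e2]; ring
  have : b - a = d - c := by
    rwa [sq_eq_sq₀ (by linarith) (by linarith)] at hsq
  constructor <;> linarith

lemma aux_roots {a b : ℝ} (h : a < b) :
    ((a + b, a * b) : ℝ × ℝ).1 ^ 2 - 4 * ((a + b, a * b) : ℝ × ℝ).2 = (b - a) ^ 2 ∧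
    xRoot (a + b, a * b) = a ∧ yRoot (a + b, a * b) = b := by
  have e : (a + b) ^ 2 - 4 * (a * b) = (b - a) ^ 2 := by ring
  refine ⟨e, ?_, ?_⟩
  · simp only [xRoot]; rw [e, Real.sqrt_sq (by linarith)]; ring
  · simp only [yRoot]; rw [e, Real.sqrt_sq (by linarith)]; ring

/-- The derivative of `(x, y) ↦ (x + y, x y)`. -/
def auxDeriv (z : ℝ × ℝ) : ℝ × ℝ →L[ℝ] ℝ × ℝ :=
  (Matrix.toLin (.finTwoProd ℝ) (.finTwoProd ℝ) !![1, 1; z.2, z.1]).toContinuousLinearMap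

lemma aux_hasDeriv (z : ℝ × ℝ) :
    HasFDerivAt (fun z : ℝ × ℝ => (z.1 + z.2, z.1 * z.2)) (auxDeriv z) z := by
  unfold auxDeriv
  rw [Matrix.toLin_finTwoProd_toContinuousLinearMap]
  have h1 : HasFDerivAt (fun z : ℝ × ℝ => z.1) (ContinuousLinearMap.fst ℝ ℝ ℝ) z := hasFDerivAt_fst
  have h2 : HasFDerivAt (fun z : ℝ × ℝ => z.2) (ContinuousLinearMap.snd ℝ ℝ ℝ) z := hasFDerivAt_snd
  refine ((h1.add h2).prodMk (h1.mul h2)).congr_fderiv ?_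
  ext <;> simp

lemma aux_det (z : ℝ × ℝ) : (auxDeriv z).det = z.1 - z.2 := by
  unfold auxDeriv
  simp only [LinearMap.det_toContinuousLinearMap, LinearMap.det_toLin, Matrix.det_fin_two_of]
  ring

lemma aux_tri {g : ℝ × ℝ → ℝ} (hg : IntegrableOn g (Icc (-1:ℝ) 1 ×ˢ Icc (-1:ℝ) 1))
    (hs : ∀ z, g z.swap = g z) (hd : ∀ a, g (a, a) = 0) :
    ∫ z in Icc (-1:ℝ) 1 ×ˢ Icc (-1:ℝ) 1, g z = 2 * ∫ z in triDom, g z := by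
  have hae : (Ioo (-1:ℝ) 1 ×ˢ Ioo (-1:ℝ) 1 : Set (ℝ × ℝ)) =ᵐ[volume]
      (Icc (-1:ℝ) 1 ×ˢ Icc (-1:ℝ) 1 : Set (ℝ × ℝ)) :=
    Measure.set_prod_ae_eq Ioo_ae_eq_Icc Ioo_ae_eq_Icc
  rw [← setIntegral_congr_set hae]
  have hgo : IntegrableOn g (Ioo (-1:ℝ) 1 ×ˢ Ioo (-1:ℝ) 1) :=
    hg.mono_set (prod_mono Ioo_subset_Icc_self Ioo_subset_Icc_self)
  have hsub : triDom ⊆ Ioo (-1:ℝ) 1 ×ˢ Ioo (-1:ℝ) 1 := by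
    rintro z ⟨h1, h2, h3⟩
    exact ⟨⟨h1, by linarith⟩, ⟨by linarith, h3⟩⟩
  have hsub' : Prod.swap ⁻¹' triDom ⊆ Ioo (-1:ℝ) 1 ×ˢ Ioo (-1:ℝ) 1 := by
    rintro z ⟨h1, h2, h3⟩
    simp only [Prod.fst_swap, Prod.snd_swap] at h1 h2 h3
    exact ⟨⟨by linarith, h3⟩, ⟨h1, by linarith⟩⟩
  have hm' : MeasurableSet (Prod.swap ⁻¹' triDom : Set (ℝ × ℝ)) := measurable_swap aux_measTri
  have hdisj : Disjoint triDom (Prod.swap ⁻¹' triDom : Set (ℝ × ℝ)) := by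
    rw [Set.disjoint_left]
    rintro z ⟨h1, h2, h3⟩ ⟨h4, h5, h6⟩
    simp only [Prod.fst_swap, Prod.snd_swap] at h5
    linarith
  have hswap : ∫ z in (Prod.swap ⁻¹' triDom : Set (ℝ × ℝ)), g z = ∫ z in triDom, g z := by
    have hmp : MeasurePreserving (Prod.swap : ℝ × ℝ → ℝ × ℝ) volume volume :=
      Measure.measurePreserving_swap
    have := hmp.setIntegral_preimage_emb MeasurableEquiv.prodComm.measurableEmbedding g triDom
    simpa only [hs] using this
  rw [setIntegral_eq_of_subset_of_forall_sdiff_eq_zero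
    (s := triDom ∪ Prod.swap ⁻¹' triDom) (measurableSet_Ioo.prod measurableSet_Ioo)
    (union_subset hsub hsub') ?_,
    setIntegral_union hdisj hm' (hgo.mono_set hsub) (hgo.mono_set hsub'), hswap, two_mul]
  rintro ⟨a, b⟩ ⟨⟨⟨h1, h2⟩, ⟨h3, h4⟩⟩, hn⟩
  simp only [triDom, mem_union, mem_ofPred_eq, mem_preimage, Prod.swap_prod_mk, not_or] at hn h1 h2 h3 h4
  rcases lt_trichotomy a b with h | h | h
  · exact absurd ⟨h1, h, h4⟩ hn.1
  · subst h; exact hd a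
  · exact absurd ⟨h3, h, h2⟩ hn.2

/-- Change of variables to the square. -/
lemma aux_cov {w : ℝ → ℝ} (hwi : IntegrableOn w (Icc (-1:ℝ) 1)) (W : ℝ × ℝ → ℝ)
    (hW : ∀ q : ℝ × ℝ, W q
      = 2 * w (xRoot q) * w (yRoot q) * (q.1 ^ 2 - 4 * q.2) ^ ((1:ℝ)/2))
    (f : ℝ × ℝ → ℝ) (hf : Continuous f) :
    ∫ q in omegaDom, f q * W q
      = ∫ z in Icc (-1:ℝ) 1 ×ˢ Icc (-1:ℝ) 1,
        (f (z.1 + z.2, z.1 * z.2) * (z.1 - z.2) ^ 2) * (w z.1 * w z.2) := by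
  rw [aux_tri (aux_int2 hwi (fun z => f (z.1 + z.2, z.1 * z.2) * (z.1 - z.2) ^ 2)
    (by fun_prop)), ← aux_image, integral_image_eq_integral_abs_det_fderiv_smul volume aux_measTri
    (fun z _ => (aux_hasDeriv z).hasFDerivWithinAt) aux_inj, ← integral_const_mul]
  · refine setIntegral_congr_fun aux_measTri ?_
    rintro ⟨a, b⟩ ⟨h1, h2, h3⟩
    simp only at h1 h2 h3
    obtain ⟨e1, e2, e3⟩ := aux_roots h2
    simp only [smul_eq_mul, aux_det]
    rw [hW, e1, e2, e3, ← Real.sqrt_eq_rpow, Real.sqrt_sq (by linarith),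
      abs_of_neg (by linarith)]
    ring
  · rintro ⟨a, b⟩
    simp only [Prod.swap_prod_mk]
    rw [add_comm b a, mul_comm b a]; ring
  · intro a; simp

/-- closed formula for the reproducing kernel of `Π_n²` in
`L²(W̃_{1/2})` in terms of Christoffel–Darboux kernels. -/
theorem stmt_5
    (w : ℝ → ℝ) (hw0 : ∀ x, 0 ≤ w x)
    (hwi : IntegrableOn w (Icc (-1:ℝ) 1))
    (hw1 : (∫ x in Icc (-1:ℝ) 1, w x) = 1)
    (hwm : ∀ k : ℕ, IntegrableOn (fun x => x ^ k * w x) (Icc (-1:ℝ) 1))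
    (p : ℕ → Polynomial ℝ) (hp : IsONPS w p)
    (W : ℝ × ℝ → ℝ)
    (hW : ∀ q : ℝ × ℝ, W q
      = 2 * w (xRoot q) * w (yRoot q) * (q.1 ^ 2 - 4 * q.2) ^ ((1:ℝ)/2))
    (K : ℕ → (ℝ × ℝ) → (ℝ × ℝ) → ℝ)
    (hK : ∀ n, IsRK omegaDom W n (K n)) :
    ∀ n : ℕ, ∀ x₁ x₂ y₁ y₂ : ℝ,
      x₁ ∈ Ioo (-1:ℝ) 1 → x₂ ∈ Ioo (-1:ℝ) 1 → y₁ ∈ Ioo (-1:ℝ) 1 → y₂ ∈ Ioo (-1:ℝ) 1 →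
      x₁ ≠ x₂ → y₁ ≠ y₂ →
      K n (x₁ + x₂, x₁ * x₂) (y₁ + y₂, y₁ * y₂)
        = (1/2) * ((CDK p (n+1) x₁ y₁ * CDK p (n+1) x₂ y₂
              - CDK p (n+1) x₂ y₁ * CDK p (n+1) x₁ y₂)
            / ((x₁ - x₂) * (y₁ - y₂))) := by
  -- reduce to `x₁ < x₂`
  have key : ∀ n : ℕ, ∀ x₁ x₂ y₁ y₂ : ℝ, -1 < x₁ → x₁ < x₂ → x₂ < 1 → y₁ ≠ y₂ →
      K n (x₁ + x₂, x₁ * x₂) (y₁ + y₂, y₁ * y₂)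
        = (1/2) * ((CDK p (n+1) x₁ y₁ * CDK p (n+1) x₂ y₂
              - CDK p (n+1) x₂ y₁ * CDK p (n+1) x₁ y₂)
            / ((x₁ - x₂) * (y₁ - y₂))) := by
    intro n x₁ x₂ y₁ y₂ h1 h12 h2 hy
    obtain ⟨-, hpoly, hrep⟩ := hK n
    have hx : (x₁ + x₂, x₁ * x₂) ∈ omegaDom := ⟨x₁, x₂, h1, h12, h2, rfl⟩
    obtain ⟨P, hPd, hPe⟩ := hpoly _ hx
    obtain ⟨A, hA, hAe⟩ := aux_CDK_poly hp (n+1) y₁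
    obtain ⟨B, hB, hBe⟩ := aux_CDK_poly hp (n+1) y₂
    obtain ⟨H, hHd, hHe⟩ := aux_antisymm n A B hA hB
    simp_rw [hAe, hBe] at hHe
    have hr := hrep H hHd _ hx
    simp_rw [hPe] at hr
    rw [aux_cov hwi W hW (fun q => evalP P q * evalP H q)
      ((aux_evalP_cont P).mul (aux_evalP_cont H))] at hr
    have r1 := aux_repr2 hwi hp n P hPd y₁ y₂
    have r2 := aux_repr2 hwi hp n P hPd y₂ y₁
    have hc : ∀ a b : ℝ, Continuous fun z : ℝ × ℝ =>
        (z.1 - z.2) * evalP P (z.1 + z.2, z.1 * z.2) *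
        (CDK p (n+1) a z.1 * CDK p (n+1) b z.2) := by
      intro a b
      have h1 := aux_evalP_cont P
      have h2 := aux_cont_CDK p (n+1) a
      have h3 := aux_cont_CDK p (n+1) b
      fun_prop
    have r3 := integral_sub (aux_int2 hwi _ (hc y₁ y₂)) (aux_int2 hwi _ (hc y₂ y₁))
    rw [r1, r2] at r3
    have r4 : ∀ z : ℝ × ℝ, (z.1 - z.2) * evalP P (z.1 + z.2, z.1 * z.2) *
        (CDK p (n+1) y₁ z.1 * CDK p (n+1) y₂ z.2) * (w z.1 * w z.2)
        - (z.1 - z.2) * evalP P (z.1 + z.2, z.1 * z.2) *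
        (CDK p (n+1) y₂ z.1 * CDK p (n+1) y₁ z.2) * (w z.1 * w z.2)
        = (evalP P (z.1 + z.2, z.1 * z.2) * evalP H (z.1 + z.2, z.1 * z.2)
          * (z.1 - z.2) ^ 2) * (w z.1 * w z.2) := by
      intro z
      linear_combination ((z.1 - z.2) * evalP P (z.1 + z.2, z.1 * z.2) * (w z.1 * w z.2))
        * hHe z.1 z.2
    simp_rw [r4] at r3
    rw [hr, add_comm y₂ y₁, mul_comm y₂ y₁] at r3
    have hH := hHe x₁ x₂
    have hsym : ∀ a b : ℝ, CDK p (n+1) a b = CDK p (n+1) b a := fun a b =>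
      Finset.sum_congr rfl fun j _ => mul_comm _ _
    rw [hsym y₁ x₁, hsym y₂ x₂, hsym y₂ x₁, hsym y₁ x₂] at hH
    rw [hPe]
    have n1 : x₁ - x₂ ≠ 0 := sub_ne_zero.mpr h12.ne
    have n2 : y₁ - y₂ ≠ 0 := sub_ne_zero.mpr hy
    field_simp
    linear_combination (-(x₁ - x₂)) * r3 - hH
  intro n x₁ x₂ y₁ y₂ hx₁ hx₂ _ _ hx hy
  rcases lt_or_gt_of_ne hx with h | h
  · exact key n x₁ x₂ y₁ y₂ hx₁.1 h hx₂.2 hy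
  · have := key n x₂ x₁ y₁ y₂ hx₂.1 h hx₁.2 hy
    rw [add_comm x₁ x₂, mul_comm x₁ x₂, this, ← neg_sub x₁ x₂, neg_mul, div_neg, ← neg_div,
      neg_sub]
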